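/- arXiv:2211.14186 — 2 statements merged into one kernel-verified Lean document; each statement's English description precedes it below -/
import Mathlib

section
/- Let A be an srl-monoid, H a convex subalgebra of A, and a, b ∈ A. The following conditions are equivalent: (a) (a,b) ∈ θ_H; (b) (a→b) ∧ e ∈ H and (b→a) ∧ e ∈ H; (c) s(a,b) ∈ H; (d) there exists h ∈ H such that h ≤ a→b and h ≤ b→a. -/
/-!
The nontrivial implication is from `θ_H` to a lower bound of both arrows lying in `H`.
If `h ∈ H` witnesses `(a, b) ∈ θ_H`, then `□h = e → h` lies in `H` and `□h ≤ h`, so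
`a · □h ≤ b`. The axiom `□y ≤ x → (x · □y)` says that half of residuation holds for elements of
the form `□y`, whence `□h ≤ a → (a · □h) ≤ a → b`, and symmetrically for `b → a`. Conversely
`s(a,b)` itself witnesses `θ_H`, by `x · (x → y) ≤ y`. The other implications are
convexity of `H` applied below `e`.
-/

variable {A : Type*} [Lattice A] [CommMonoid A]

/-- An srl-monoid structure on a lattice-ordered commutative monoid, with arrow `arr`
and monoid unit `e = 1`. -/
structure IsSRL (arr : A → A → A) : Prop where
  mul_sup : ∀ a b c : A, (a ⊔ b) * c = (a * c) ⊔ (b * c)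
  ax1 : ∀ x y : A, (1 : A) ≤ arr (x ⊓ y) y
  ax2 : ∀ x y z : A, arr x y ≤ arr (z ⊓ 1) (arr x y)
  ax3 : ∀ x y : A, x * arr x y ≤ y
  ax4 : ∀ x y z : A, arr z (x ⊓ y) = arr z x ⊓ arr z y
  ax5 : ∀ x y : A, arr 1 (arr 1 x * arr 1 y) = arr 1 x * arr 1 y
  ax6 : ∀ x y : A, arr 1 y ≤ arr x (x * arr 1 y)

/-- A congruence of an srl-monoid: an equivalence relation compatible with ⊓, ⊔, · and →. -/
def IsCongruence (arr : A → A → A) (θ : A → A → Prop) : Prop :=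
  Equivalence θ ∧
  (∀ a b c d : A, θ a b → θ c d → θ (a ⊓ c) (b ⊓ d)) ∧
  (∀ a b c d : A, θ a b → θ c d → θ (a ⊔ c) (b ⊔ d)) ∧
  (∀ a b c d : A, θ a b → θ c d → θ (a * c) (b * d)) ∧
  (∀ a b c d : A, θ a b → θ c d → θ (arr a c) (arr b d))

/-- A convex subalgebra of an srl-monoid. -/
structure IsConvexSubalgebra (arr : A → A → A) (H : Set A) : Prop where
  one_mem : (1 : A) ∈ H
  inf_mem : ∀ a b : A, a ∈ H → b ∈ H → a ⊓ b ∈ H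
  sup_mem : ∀ a b : A, a ∈ H → b ∈ H → a ⊔ b ∈ H
  mul_mem : ∀ a b : A, a ∈ H → b ∈ H → a * b ∈ H
  arr_mem : ∀ a b : A, a ∈ H → b ∈ H → arr a b ∈ H
  convex : ∀ a b c : A, a ∈ H → b ∈ H → a ≤ c → c ≤ b → c ∈ H

/-- A strongly convex subalgebra of an srl-monoid. -/
structure IsStronglyConvexSubalgebra (arr : A → A → A) (H : Set A) : Prop where
  toConvex : IsConvexSubalgebra arr H
  strong : ∀ a h : A, h ∈ H → a * h ≤ 1 → 1 ≤ arr h a → a ∈ H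

/-- `s(a,b) = (a→b) ⊓ (b→a) ⊓ e`. -/
def srlS (arr : A → A → A) (a b : A) : A := arr a b ⊓ arr b a ⊓ 1

/-- `θ_H = {(a,b) : a·h ≤ b and b·h ≤ a for some h ∈ H}`. -/
def thetaH (H : Set A) (a b : A) : Prop := ∃ h ∈ H, a * h ≤ b ∧ b * h ≤ a

/-- Iterates of `□(a) = e → a`: `□⁰(a) = a`, `□¹(a) = □(a)`,
`□^{n+1}(a) = □(a) · □ⁿ(a)` for `n ≥ 1`. -/
def boxIter (arr : A → A → A) : ℕ → A → A
  | 0, a => a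
  | 1, a => arr 1 a
  | n + 2, a => arr 1 a * boxIter arr (n + 1) a

theorem IsSRL.mul_mono_right {A : Type*} [Lattice A] [CommMonoid A] {arr : A → A → A}
    (hA : IsSRL arr) {x y : A} (c : A) (h : x ≤ y) : c * x ≤ c * y := by
  have h1 := hA.mul_sup x y c
  rw [sup_eq_right.mpr h] at h1
  rw [mul_comm c x, mul_comm c y, h1]
  exact le_sup_left

theorem IsSRL.arr_mono_right {A : Type*} [Lattice A] [CommMonoid A] {arr : A → A → A}
    (hA : IsSRL arr) {x y : A} (z : A) (h : x ≤ y) : arr z x ≤ arr z y := by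
  have h1 := hA.ax4 x y z
  rw [inf_eq_left.mpr h] at h1
  rw [h1]
  exact inf_le_right

theorem IsSRL.box_le {A : Type*} [Lattice A] [CommMonoid A] {arr : A → A → A}
    (hA : IsSRL arr) (h : A) : arr 1 h ≤ h := by
  simpa using hA.ax3 1 h

/-- The half of residuation that may fail for arbitrary `h` holds after replacing `h` by `□h`. -/
theorem IsSRL.box_le_arr {A : Type*} [Lattice A] [CommMonoid A] {arr : A → A → A}
    (hA : IsSRL arr) {a b h : A} (hab : a * h ≤ b) : arr 1 h ≤ arr a b :=
  (hA.ax6 a h).trans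
    (hA.arr_mono_right a ((hA.mul_mono_right a (hA.box_le h)).trans hab))

/-- for a convex subalgebra `H` of an srl-monoid and `a, b ∈ A`, the
following are equivalent: (a) `(a,b) ∈ θ_H`; (b) `(a→b) ⊓ e ∈ H` and `(b→a) ⊓ e ∈ H`;
(c) `s(a,b) ∈ H`; (d) there is `h ∈ H` with `h ≤ a→b` and `h ≤ b→a`. -/
theorem stmt8 {A : Type*} [Lattice A] [CommMonoid A] (arr : A → A → A)
    (hA : IsSRL arr) (H : Set A) (hH : IsConvexSubalgebra arr H) (a b : A) :
    (thetaH H a b ↔ (arr a b ⊓ 1 ∈ H ∧ arr b a ⊓ 1 ∈ H)) ∧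
    ((arr a b ⊓ 1 ∈ H ∧ arr b a ⊓ 1 ∈ H) ↔ srlS arr a b ∈ H) ∧
    (srlS arr a b ∈ H ↔ ∃ h ∈ H, h ≤ arr a b ∧ h ≤ arr b a) := by
  have hcd : srlS arr a b ∈ H ↔ ∃ h ∈ H, h ≤ arr a b ∧ h ≤ arr b a := by
    constructor
    · intro hs
      exact ⟨_, hs, inf_le_left.trans inf_le_left, inf_le_left.trans inf_le_right⟩
    · rintro ⟨h, hh, h1, h2⟩
      exact hH.convex (h ⊓ 1) 1 _ (hH.inf_mem _ _ hh hH.one_mem) hH.one_mem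
        (inf_le_inf_right _ (le_inf h1 h2)) inf_le_right
  have hbc : (arr a b ⊓ 1 ∈ H ∧ arr b a ⊓ 1 ∈ H) ↔ srlS arr a b ∈ H := by
    constructor
    · rintro ⟨h1, h2⟩
      have h3 := hH.inf_mem _ _ h1 h2
      rwa [← inf_inf_distrib_right] at h3
    · intro hs
      exact ⟨hH.convex _ 1 _ hs hH.one_mem (inf_le_inf_right _ inf_le_left) inf_le_right,
        hH.convex _ 1 _ hs hH.one_mem (inf_le_inf_right _ inf_le_right) inf_le_right⟩
  refine ⟨?_, hbc, hcd⟩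
  rw [hbc]
  constructor
  · rintro ⟨h, hh, h1, h2⟩
    exact hcd.mpr ⟨arr 1 h, hH.arr_mem _ _ hH.one_mem hh, hA.box_le_arr h1, hA.box_le_arr h2⟩
  · intro hs
    exact ⟨_, hs,
      (hA.mul_mono_right a (inf_le_left.trans inf_le_left)).trans (hA.ax3 a b),
      (hA.mul_mono_right b (inf_le_left.trans inf_le_right)).trans (hA.ax3 b a)⟩
end

section
/- Let A be an srl-monoid and a, b ∈ A. Then for every x ∈ A the following are equivalent: (i) x is related to e by every congruence θ of A with (a,b) ∈ θ; (ii) x belongs to every strongly convex subalgebra of A containing s(a,b). Equivalently, e/θ(a,b) = C[s(a,b)], where θ(a,b) is the smallest congruence containing (a,b) and C[s(a,b)] is the smallest strongly convex subalgebra containing s(a,b). -/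
/-!
Write `□x = e → x`, and call `d` open if `□d = d`. Open elements are closed under products, every
value of `→` is open, and `x → y` is the largest open `d` with `x · d ≤ y` (`IsSRL.le_arr`
and `ax3`); so the arrow behaves as a residual as long as only open elements are tested.

If `θ` is a congruence, `e/θ` is a strongly convex subalgebra, and it contains `s(a,b)` when
`(a,b) ∈ θ`, since `s(a,a) = e`. Conversely, if `H` is a strongly convex subalgebra, then
`θ_H` is a congruence: the witness `h ∈ H` can be shrunk to the open element `□(h ∧ e) ∈ H`, after
which compatibility with `→` follows from residuation. Strong convexity is exactly what makes
`e/θ_H` contained in `H`, and `s(a,b) ∈ H` is itself a witness for `(a,b) ∈ θ_H`.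
-/

variable {A : Type*} [Lattice A] [CommMonoid A]

namespace IsSRL

variable {arr : A → A → A}

lemma mul_le_mul_rt (hA : IsSRL arr) {x y : A} (h : x ≤ y) (z : A) : x * z ≤ y * z := by
  have := hA.mul_sup x y z
  rw [sup_eq_right.2 h] at this
  rw [this]
  exact le_sup_left

lemma mul_mono (hA : IsSRL arr) {x y z w : A} (h : x ≤ y) (h' : z ≤ w) : x * z ≤ y * w := by
  refine (hA.mul_le_mul_rt h z).trans ?_
  rw [mul_comm y z, mul_comm y w]
  exact hA.mul_le_mul_rt h' y

lemma arr_mono (hA : IsSRL arr) (z : A) {x y : A} (h : x ≤ y) : arr z x ≤ arr z y := by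
  have := hA.ax4 x y z
  rw [inf_eq_left.2 h] at this
  rw [this]
  exact inf_le_right

lemma one_le_arr (hA : IsSRL arr) {x y : A} (h : x ≤ y) : 1 ≤ arr x y := by
  have := hA.ax1 x y
  rwa [inf_eq_left.2 h] at this

lemma box_le_s15 (hA : IsSRL arr) (x : A) : arr 1 x ≤ x := by
  simpa using hA.ax3 1 x

lemma box_one (hA : IsSRL arr) : arr 1 1 = (1 : A) :=
  le_antisymm (hA.box_le_s15 1) (hA.one_le_arr le_rfl)

lemma box_arr (hA : IsSRL arr) (x y : A) : arr 1 (arr x y) = arr x y :=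
  le_antisymm (hA.box_le_s15 _) (by simpa using hA.ax2 x y 1)

lemma box_mul (hA : IsSRL arr) {x y : A} (hx : arr 1 x = x) (hy : arr 1 y = y) :
    arr 1 (x * y) = x * y := by
  have := hA.ax5 x y
  rwa [hx, hy] at this

/-- Residuation for open elements: together with `ax3`, `arr x y` is the largest open `d` with
`x * d ≤ y`. -/
lemma le_arr (hA : IsSRL arr) {x y d : A} (hd : arr 1 d = d) (h : x * d ≤ y) : d ≤ arr x y := by
  have := hA.ax6 x d
  rw [hd] at this
  exact this.trans (hA.arr_mono x h)

/-- A congruence's class of the unit is a strongly convex subalgebra. -/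
lemma class_stronglyConvex (hA : IsSRL arr) {θ : A → A → Prop} (hθ : IsCongruence arr θ) :
    IsStronglyConvexSubalgebra arr {x | θ x 1} := by
  obtain ⟨heq, hinf, hsup, hmul, harr⟩ := hθ
  refine ⟨⟨heq.refl 1, fun x y hx hy => ?_, fun x y hx hy => ?_, fun x y hx hy => ?_,
    fun x y hx hy => ?_, fun x y z hx hy hxz hzy => ?_⟩, fun x h hh h1 h2 => ?_⟩
  · simpa using hinf _ _ _ _ hx hy
  · simpa using hsup _ _ _ _ hx hy
  · simpa using hmul _ _ _ _ hx hy
  · simpa [hA.box_one] using harr _ _ _ _ hx hy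
  · -- `z = z ∨ x` is related to `z ∨ e`, and `z = z ∧ y` to `z ∧ e`; absorb the second in the first.
    have e1 : θ z (z ⊔ 1) := by
      simpa [sup_eq_left.2 hxz] using hsup _ _ _ _ (heq.refl z) hx
    have e2 : θ z (z ⊓ 1) := by
      simpa [inf_eq_left.2 hzy] using hinf _ _ _ _ (heq.refl z) hy
    have e3 : θ (z ⊔ 1) 1 := by
      simpa using hsup _ _ _ _ e2 (heq.refl 1)
    exact heq.trans e1 e3
  · have hxh : θ (x * h) x := by simpa using hmul _ _ _ _ (heq.refl x) hh
    -- modulo `θ`, `x ≤ e` because `x * h ≤ e`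
    have e1 : θ (x ⊔ 1) 1 := by
      have := hsup _ _ _ _ hxh (heq.refl 1)
      rw [sup_eq_right.2 h1] at this
      exact heq.symm this
    -- modulo `θ`, `e ≤ □x ≤ x` because `h → x` is related to `□x`
    have e2 : θ (arr h x) (arr 1 x) := harr _ _ _ _ hh (heq.refl x)
    have e3 : θ (arr h x ⊔ 1 ⊔ x) (arr 1 x ⊔ 1 ⊔ x) :=
      hsup _ _ _ _ (hsup _ _ _ _ e2 (heq.refl 1)) (heq.refl x)
    have e4 : θ (arr h x ⊔ x) x := by
      simpa [sup_eq_right.2 (hA.box_le_s15 x)] using hsup _ _ _ _ e2 (heq.refl x)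
    have e5 : arr 1 x ⊔ 1 ⊔ x = x ⊔ 1 := by
      rw [sup_right_comm, sup_eq_right.2 (hA.box_le_s15 x)]
    rw [sup_eq_left.2 h2, e5] at e3
    exact heq.trans (heq.symm e4) (heq.trans e3 e1)

/-- Witnesses of `thetaH` may be taken open. -/
lemma exists_open_witness (hA : IsSRL arr) {H : Set A} (hH : IsConvexSubalgebra arr H) {x y : A}
    (h : thetaH H x y) : ∃ k ∈ H, arr 1 k = k ∧ x * k ≤ y ∧ y * k ≤ x := by
  obtain ⟨h, hh, h1, h2⟩ := h
  have hle : arr 1 (h ⊓ 1) ≤ h := (hA.box_le_s15 _).trans inf_le_left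
  exact ⟨arr 1 (h ⊓ 1), hH.arr_mem _ _ hH.one_mem (hH.inf_mem _ _ hh hH.one_mem), hA.box_arr _ _,
    (hA.mul_mono le_rfl hle).trans h1, (hA.mul_mono le_rfl hle).trans h2⟩

lemma arr_mul_le (hA : IsSRL arr) {a b c d h k : A} (ho : arr 1 h = h) (ko : arr 1 k = k)
    (h1 : b * h ≤ a) (h2 : c * k ≤ d) : arr a c * (h * k) ≤ arr b d := by
  refine hA.le_arr (hA.box_mul (hA.box_arr _ _) (hA.box_mul ho ko)) ?_
  calc b * (arr a c * (h * k)) = b * h * arr a c * k := by ac_rfl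
    _ ≤ a * arr a c * k := hA.mul_le_mul_rt (hA.mul_le_mul_rt h1 _) _
    _ ≤ c * k := hA.mul_le_mul_rt (hA.ax3 a c) k
    _ ≤ d := h2

lemma thetaH_isCongruence (hA : IsSRL arr) {H : Set A} (hH : IsConvexSubalgebra arr H) :
    IsCongruence arr (thetaH H) := by
  refine ⟨⟨fun x => ⟨1, hH.one_mem, by simp, by simp⟩, ?_, ?_⟩, ?_, ?_, ?_, ?_⟩
  · rintro x y ⟨h, hh, h1, h2⟩
    exact ⟨h, hh, h2, h1⟩
  · rintro x y z ⟨h, hh, h1, h2⟩ ⟨k, hk, k1, k2⟩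
    refine ⟨h * k, hH.mul_mem _ _ hh hk, ?_, ?_⟩
    · rw [← mul_assoc]
      exact (hA.mul_le_mul_rt h1 k).trans k1
    · rw [mul_comm h k, ← mul_assoc]
      exact (hA.mul_le_mul_rt k2 h).trans h2
  · rintro a b c d ⟨h, hh, h1, h2⟩ ⟨k, hk, k1, k2⟩
    exact ⟨h ⊓ k, hH.inf_mem _ _ hh hk,
      le_inf ((hA.mul_mono inf_le_left inf_le_left).trans h1)
        ((hA.mul_mono inf_le_right inf_le_right).trans k1),
      le_inf ((hA.mul_mono inf_le_left inf_le_left).trans h2)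
        ((hA.mul_mono inf_le_right inf_le_right).trans k2)⟩
  · rintro a b c d ⟨h, hh, h1, h2⟩ ⟨k, hk, k1, k2⟩
    refine ⟨h ⊓ k, hH.inf_mem _ _ hh hk, ?_, ?_⟩ <;> rw [hA.mul_sup]
    · exact sup_le_sup ((hA.mul_mono le_rfl inf_le_left).trans h1)
        ((hA.mul_mono le_rfl inf_le_right).trans k1)
    · exact sup_le_sup ((hA.mul_mono le_rfl inf_le_left).trans h2)
        ((hA.mul_mono le_rfl inf_le_right).trans k2)
  · rintro a b c d ⟨h, hh, h1, h2⟩ ⟨k, hk, k1, k2⟩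
    refine ⟨h * k, hH.mul_mem _ _ hh hk, ?_, ?_⟩ <;> rw [mul_mul_mul_comm]
    · exact hA.mul_mono h1 k1
    · exact hA.mul_mono h2 k2
  · intro a b c d hab hcd
    obtain ⟨h, hh, ho, h1, h2⟩ := hA.exists_open_witness hH hab
    obtain ⟨k, hk, ko, k1, k2⟩ := hA.exists_open_witness hH hcd
    exact ⟨h * k, hH.mul_mem _ _ hh hk, hA.arr_mul_le ho ko h2 k1, hA.arr_mul_le ho ko h1 k2⟩

lemma mem_of_thetaH_one (hA : IsSRL arr) {H : Set A} (hH : IsStronglyConvexSubalgebra arr H)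
    {x : A} (h : thetaH H x 1) : x ∈ H := by
  obtain ⟨h, hh, h1, h2⟩ := h
  rw [one_mul] at h2
  exact hH.strong x h hh h1 (hA.one_le_arr h2)

lemma thetaH_of_srlS_mem (hA : IsSRL arr) {H : Set A} {a b : A} (h : srlS arr a b ∈ H) :
    thetaH H a b :=
  ⟨_, h, (hA.mul_mono le_rfl (inf_le_left.trans inf_le_left)).trans (hA.ax3 a b),
    (hA.mul_mono le_rfl (inf_le_left.trans inf_le_right)).trans (hA.ax3 b a)⟩

lemma srlS_rel_one (hA : IsSRL arr) {θ : A → A → Prop} (hθ : IsCongruence arr θ) {a b : A}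
    (h : θ a b) : θ (srlS arr a b) 1 := by
  obtain ⟨heq, hinf, -, -, harr⟩ := hθ
  have hb := heq.refl b
  have := hinf _ _ _ _ (hinf _ _ _ _ (harr _ _ _ _ h hb) (harr _ _ _ _ hb h)) (heq.refl 1)
  rwa [inf_idem, inf_eq_right.2 (hA.one_le_arr (le_refl b))] at this

end IsSRL

/-- `e/θ(a,b) = C[s(a,b)]`: an element `x` lies in the `e`-class of every
congruence containing `(a,b)` iff it lies in every strongly convex subalgebra
containing `s(a,b)`. -/
theorem stmt15 {A : Type*} [Lattice A] [CommMonoid A] (arr : A → A → A)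
    (hA : IsSRL arr) (a b : A) :
    ∀ x : A,
      (∀ θ : A → A → Prop, IsCongruence arr θ → θ a b → θ x 1) ↔
      (∀ H : Set A, IsStronglyConvexSubalgebra arr H → srlS arr a b ∈ H → x ∈ H) := by
  intro x
  constructor
  · intro hx H hH hs
    exact hA.mem_of_thetaH_one hH
      (hx _ (hA.thetaH_isCongruence hH.toConvex) (hA.thetaH_of_srlS_mem hs))
  · intro hx θ hθ hab
    exact hx _ (hA.class_stronglyConvex hθ) (hA.srlS_rel_one hθ hab)
end
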